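/- Let n ≥ 2. If the comodule category A_F of the normal triangular matrix comonad F is hereditary, then for all i < j the functor F_{ij} sends every injective object of A_i to an injective object of A_j. -/

import Mathlib

/-!
STATEMENT 14: Let `n ≥ 2`. If the category of comodules over a normal triangular
matrix comonad `F` on `A₁ × ⋯ × Aₙ` is hereditary, then for all `i < j` the functor
`F_{ij}` sends every injective object of `A_i` to an injective object of `A_j`.
-/

open CategoryTheory Limits

universe v u

variable {n : ℕ} {A : Fin n → Type u} [∀ i, Category.{v} (A i)]
  [∀ i, Abelian (A i)] [∀ i, EnoughInjectives (A i)]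
variable (F : ∀ ⦃i j : Fin n⦄, i < j → (A i ⥤ A j))
variable (δ : ∀ ⦃i k j : Fin n⦄ (h₁ : i < k) (h₂ : k < j), F (h₁.trans h₂) ⟶ F h₁ ⋙ F h₂)

/-- A comodule over the normal triangular matrix comonad determined by the data
`(F, δ)`. -/
structure Comod where
  X : ∀ i, A i
  d : ∀ {i j : Fin n} (h : i < j), X j ⟶ (F h).obj (X i)
  compat : ∀ {i k j : Fin n} (h₁ : i < k) (h₂ : k < j),
    d h₂ ≫ (F h₂).map (d h₁) = d (h₁.trans h₂) ≫ (δ h₁ h₂).app (X i)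

/-- Morphisms of comodules. -/
@[ext]
structure ComodHom (M N : Comod F δ) where
  f : ∀ i, M.X i ⟶ N.X i
  comm : ∀ {i j : Fin n} (h : i < j), f j ≫ N.d h = M.d h ≫ (F h).map (f i)

instance : Category (Comod F δ) where
  Hom M N := ComodHom F δ M N
  id M := ⟨fun i => 𝟙 (M.X i), fun h => by simp⟩
  comp f g := ⟨fun i => f.f i ≫ g.f i, fun h => by
    rw [Category.assoc, g.comm, ← Category.assoc, f.comm, Category.assoc, Functor.map_comp]⟩
  id_comp f := by apply ComodHom.ext; funext i; exact Category.id_comp _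
  comp_id f := by apply ComodHom.ext; funext i; exact Category.comp_id _
  assoc f g h := by apply ComodHom.ext; funext i; exact Category.assoc _ _ _

/-- A category is hereditary if for every epimorphism `e : E ⟶ X` with `E` injective,
`X` is also injective. -/
def Hereditary (C : Type*) [Category C] : Prop :=
  ∀ ⦃E X : C⦄ (e : E ⟶ X), Epi e → Injective E → Injective X

/-- The forgetful functor from comodules to `A₁ × ⋯ × Aₙ`. -/
def forgetComod : Comod F δ ⥤ (∀ i, A i) where
  obj M := M.X
  map f := f.f

/-!
Let `cofree E` be the cofree comodule on a family `E`: its `l`-th component is the product of `E l`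
and of all `F_{il} (E i)` with `i < l`. Kernel pairs of comodules are formed componentwise, so
monomorphisms of comodules are componentwise monomorphisms, and `cofree E` is injective when every
`E i` is. On the other hand, replacing the components of index `< j` of a comodule `M` by zero gives
a quotient of `M`. If the category of comodules is hereditary and `M` is injective, this quotient is
injective; its lowest component is `M.X j`, and testing against comodules with zero coaction shows
that `M.X j` is injective. Applied to `M = cofree E`, this makes the factor `F_{ij} (E i)` of
`M.X j` injective.
-/

section

omit [∀ i, Abelian (A i)] [∀ i, EnoughInjectives (A i)]

/-- Coassociativity of the comultiplication `δ` of a normal triangular matrix comonad. -/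
def IsCoassociative : Prop :=
  ∀ ⦃i k l j : Fin n⦄ (h₁ : i < k) (h₂ : k < l) (h₃ : l < j) (X : A i),
    (δ h₁ (h₂.trans h₃)).app X ≫ (δ h₂ h₃).app ((F h₁).obj X) =
      (δ (h₁.trans h₂) h₃).app X ≫ (F h₃).map ((δ h₁ h₂).app X)

namespace Comod

variable {F δ}

section Componentwise

variable {M N P : Comod F δ}

theorem comp_f (f : M ⟶ N) (g : N ⟶ P) (i : Fin n) : (f ≫ g).f i = f.f i ≫ g.f i := rfl

theorem hom_ext {f g : M ⟶ N} (h : ∀ i, f.f i = g.f i) : f = g :=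
  ComodHom.ext (funext h)

theorem mono_of_forall_mono_f (f : M ⟶ N) (hf : ∀ i, Mono (f.f i)) : Mono f where
  right_cancellation a b hab := hom_ext fun i => by
    have := hf i
    rw [← cancel_mono (f.f i), ← comp_f, ← comp_f, hab]

theorem epi_of_forall_epi_f (f : M ⟶ N) (hf : ∀ i, Epi (f.f i)) : Epi f where
  left_cancellation a b hab := hom_ext fun i => by
    have := hf i
    rw [← cancel_epi (f.f i), ← comp_f, ← comp_f, hab]

end Componentwise

section FiberProduct

variable [∀ i, HasPullbacks (A i)]
  [∀ ⦃i j : Fin n⦄ (h : i < j), PreservesLimitsOfShape WalkingCospan (F h)]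
variable {M N P : Comod F δ} (f : M ⟶ P) (g : N ⟶ P)

theorem isPullback_map_pullback {i j : Fin n} (h : i < j) :
    IsPullback ((F h).map (pullback.fst (f.f i) (g.f i)))
      ((F h).map (pullback.snd (f.f i) (g.f i))) ((F h).map (f.f i)) ((F h).map (g.f i)) :=
  (IsPullback.of_hasPullback (f.f i) (g.f i)).map (F h)

/-- The coaction of `fiberProduct f g`, induced by those of `M` and `N`. -/
noncomputable def fiberProductD {i j : Fin n} (h : i < j) :
    pullback (f.f j) (g.f j) ⟶ (F h).obj (pullback (f.f i) (g.f i)) :=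
  (isPullback_map_pullback f g h).lift (pullback.fst _ _ ≫ M.d h) (pullback.snd _ _ ≫ N.d h) (by
    rw [Category.assoc, Category.assoc, ← f.comm, ← g.comm, pullback.condition_assoc])

theorem fiberProductD_map_fst {i j : Fin n} (h : i < j) :
    fiberProductD f g h ≫ (F h).map (pullback.fst (f.f i) (g.f i)) =
      pullback.fst (f.f j) (g.f j) ≫ M.d h :=
  IsPullback.lift_fst _ _ _ _

theorem fiberProductD_map_snd {i j : Fin n} (h : i < j) :
    fiberProductD f g h ≫ (F h).map (pullback.snd (f.f i) (g.f i)) =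
      pullback.snd (f.f j) (g.f j) ≫ N.d h :=
  IsPullback.lift_snd _ _ _ _

/-- The fibre product of two comodule morphisms, formed componentwise. -/
noncomputable def fiberProduct : Comod F δ where
  X i := pullback (f.f i) (g.f i)
  d h := fiberProductD f g h
  compat {i k j} h₁ h₂ := by
    apply ((isPullback_map_pullback f g h₁).map (F h₂)).hom_ext
    · have nat := (δ h₁ h₂).naturality (pullback.fst (f.f i) (g.f i))
      simp only [Functor.comp_map] at nat
      rw [Category.assoc, Category.assoc, ← nat, ← Functor.map_comp, fiberProductD_map_fst,
        reassoc_of% fiberProductD_map_fst f g (h₁.trans h₂), Functor.map_comp,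
        reassoc_of% fiberProductD_map_fst f g h₂, M.compat]
    · have nat := (δ h₁ h₂).naturality (pullback.snd (f.f i) (g.f i))
      simp only [Functor.comp_map] at nat
      rw [Category.assoc, Category.assoc, ← nat, ← Functor.map_comp, fiberProductD_map_snd,
        reassoc_of% fiberProductD_map_snd f g (h₁.trans h₂), Functor.map_comp,
        reassoc_of% fiberProductD_map_snd f g h₂, N.compat]

/-- The first projection of the fibre product. -/
noncomputable def fiberProductFst : fiberProduct f g ⟶ M :=
  ⟨fun _ => pullback.fst _ _, fun h => (fiberProductD_map_fst f g h).symm⟩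

/-- The second projection of the fibre product. -/
noncomputable def fiberProductSnd : fiberProduct f g ⟶ N :=
  ⟨fun _ => pullback.snd _ _, fun h => (fiberProductD_map_snd f g h).symm⟩

theorem fiberProduct_condition : fiberProductFst f g ≫ f = fiberProductSnd f g ≫ g :=
  hom_ext fun _ => pullback.condition

theorem mono_f_of_mono (f : M ⟶ N) [Mono f] (i : Fin n) : Mono (f.f i) := by
  have fst_eq_snd : fiberProductFst f f = fiberProductSnd f f := by
    rw [← cancel_mono f, fiberProduct_condition]
  rw [mono_iff_fst_eq_snd (pullbackIsPullback (f.f i) (f.f i))]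
  exact congrFun (congrArg ComodHom.f fst_eq_snd) i

end FiberProduct

section Cofree

section Factors

variable (F) (E : ∀ i, A i) (l : Fin n)

/-- The factors of the `l`-th component of the cofree comodule on `E`: the index `none` stands for
`E l` and the index `some i`, where `i < l`, for `F_{il} (E i)`. -/
def cofreeFactor : Option (Set.Iio l) → A l
  | none => E l
  | some i => (F i.2).obj (E i)

variable [HasFiniteProducts (A l)]

/-- The `l`-th component of the cofree comodule on `E`, the product of `E l` and of all
`F_{il} (E i)` with `i < l`. -/
noncomputable abbrev cofreeObj : A l := ∏ᶜ cofreeFactor F E l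

/-- The projection of `cofreeObj F E l` to `E l`; these form the counit of the cofree comodule. -/
noncomputable def cofreeCounit : cofreeObj F E l ⟶ E l :=
  Pi.π (cofreeFactor F E l) none

variable {l} in
/-- The projection of `cofreeObj F E l` to `F_{il} (E i)`. -/
noncomputable def cofreeProj {i : Fin n} (h : i < l) : cofreeObj F E l ⟶ (F h).obj (E i) :=
  Pi.π (cofreeFactor F E l) (some ⟨i, h⟩)

variable {l} in
theorem isSplitEpi_cofreeProj [HasZeroMorphisms (A l)] {i : Fin n} (h : i < l) :
    IsSplitEpi (cofreeProj F E h) :=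
  isSplitEpi_pi_π (cofreeFactor F E l) (some ⟨i, h⟩)

variable {F E l}

theorem map_cofreeObj_hom_ext {C : Type*} [Category C] (G : A l ⥤ C) [PreservesFiniteProducts G]
    {Z : C} {f g : Z ⟶ G.obj (cofreeObj F E l)}
    (counit : f ≫ G.map (cofreeCounit F E l) = g ≫ G.map (cofreeCounit F E l))
    (proj : ∀ ⦃i : Fin n⦄ (h : i < l),
      f ≫ G.map (cofreeProj F E h) = g ≫ G.map (cofreeProj F E h)) : f = g :=
  Fan.IsLimit.hom_ext (isLimitOfHasProductOfPreservesLimit G (cofreeFactor F E l)) _ _ fun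
    | none => counit
    | some i => proj i.2

variable {Z : A l} (a : Z ⟶ E l) (b : ∀ ⦃i : Fin n⦄ (h : i < l), Z ⟶ (F h).obj (E i))

/-- The morphism to `cofreeObj F E l` with prescribed projections. -/
noncomputable def cofreeObjLift : Z ⟶ cofreeObj F E l :=
  Pi.lift fun
    | none => a
    | some i => b i.2

theorem cofreeObjLift_counit : cofreeObjLift a b ≫ cofreeCounit F E l = a :=
  Pi.lift_π _ _

theorem cofreeObjLift_proj {i : Fin n} (h : i < l) : cofreeObjLift a b ≫ cofreeProj F E h = b h :=
  Pi.lift_π _ _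

end Factors

variable [∀ i, HasFiniteProducts (A i)]
  [∀ ⦃i j : Fin n⦄ (h : i < j), PreservesFiniteProducts (F h)]

section Coaction

variable (δ) (E : ∀ i, A i) {k l : Fin n} (h : k < l)

/-- The coaction of the cofree comodule on `E`: its component at the factor `E k` is a projection,
and its component at the factor `F_{ik} (E i)` is a projection followed by `δ`. -/
noncomputable def cofreeD : cofreeObj F E l ⟶ (F h).obj (cofreeObj F E k) :=
  Fan.IsLimit.lift (isLimitOfHasProductOfPreservesLimit (F h) (cofreeFactor F E k)) fun
    | none => cofreeProj F E h
    | some i => cofreeProj F E (i.2.trans h) ≫ (δ i.2 h).app (E i)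

theorem cofreeD_map_counit :
    cofreeD δ E h ≫ (F h).map (cofreeCounit F E k) = cofreeProj F E h :=
  Fan.IsLimit.fac (isLimitOfHasProductOfPreservesLimit (F h) (cofreeFactor F E k)) _ none

theorem cofreeD_map_proj {i : Fin n} (hi : i < k) :
    cofreeD δ E h ≫ (F h).map (cofreeProj F E hi) =
      cofreeProj F E (hi.trans h) ≫ (δ hi h).app (E i) :=
  Fan.IsLimit.fac (isLimitOfHasProductOfPreservesLimit (F h) (cofreeFactor F E k)) _
    (some ⟨i, hi⟩)

end Coaction

/-- The cofree comodule on a family `E`, the value at `E` of the right adjoint of the forgetful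
functor. -/
noncomputable abbrev cofree (hδ : IsCoassociative F δ) (E : ∀ i, A i) : Comod F δ where
  X l := cofreeObj F E l
  d h := cofreeD δ E h
  compat {i k j} h₁ h₂ := by
    have nat {Y : A i} (p : cofreeObj F E i ⟶ Y) := (δ h₁ h₂).naturality p
    simp only [Functor.comp_map] at nat
    apply map_cofreeObj_hom_ext (F h₁ ⋙ F h₂)
    · simp only [Functor.comp_map, Category.assoc, ← nat, ← Functor.map_comp, cofreeD_map_counit,
        reassoc_of% cofreeD_map_counit δ E (h₁.trans h₂), cofreeD_map_proj]
    · intro m hm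
      simp only [Functor.comp_map, Category.assoc, ← nat, ← Functor.map_comp, cofreeD_map_proj,
        reassoc_of% cofreeD_map_proj δ E (h₁.trans h₂) hm]
      rw [Functor.map_comp, reassoc_of% cofreeD_map_proj δ E h₂ (hm.trans h₁), hδ hm h₁ h₂]

variable (hδ : IsCoassociative F δ) {E : ∀ i, A i} {M : Comod F δ}

theorem f_comp_cofreeProj (f : M ⟶ cofree hδ E) {i l : Fin n} (h : i < l) :
    f.f l ≫ cofreeProj F E h = M.d h ≫ (F h).map (f.f i ≫ cofreeCounit F E i) := by
  rw [← cofreeD_map_counit δ E h, reassoc_of% f.comm h, Functor.map_comp]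

theorem cofree_hom_ext {f g : M ⟶ cofree hδ E}
    (h : ∀ i, f.f i ≫ cofreeCounit F E i = g.f i ≫ cofreeCounit F E i) : f = g :=
  hom_ext fun l => map_cofreeObj_hom_ext (𝟭 (A l)) (h l) fun i hi => by
    simp only [Functor.id_map, f_comp_cofreeProj, h]

/-- The comodule morphism to the cofree comodule on `E` corresponding to a family of morphisms
to `E`. -/
noncomputable def cofreeLift (φ : ∀ i, M.X i ⟶ E i) : M ⟶ cofree hδ E where
  f l := cofreeObjLift (φ l) fun i h => M.d h ≫ (F h).map (φ i)
  comm {k l} h := by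
    apply map_cofreeObj_hom_ext (F h)
    · simp only [Category.assoc, cofreeD_map_counit, cofreeObjLift_proj, ← Functor.map_comp,
        cofreeObjLift_counit]
    · intro i hi
      have nat := (δ hi h).naturality (φ i)
      simp only [Functor.comp_map] at nat
      simp only [Category.assoc, cofreeD_map_proj, ← Functor.map_comp, cofreeObjLift_proj]
      rw [← Category.assoc, cofreeObjLift_proj, Category.assoc, nat, Functor.map_comp,
        reassoc_of% M.compat hi h]

theorem cofreeLift_f_comp_counit (φ : ∀ i, M.X i ⟶ E i) (i : Fin n) :
    (cofreeLift hδ φ).f i ≫ cofreeCounit F E i = φ i :=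
  cofreeObjLift_counit (φ i) fun k h => M.d h ≫ (F h).map (φ k)

theorem injective_cofree [∀ i, HasPullbacks (A i)]
    [∀ ⦃i j : Fin n⦄ (h : i < j), PreservesLimitsOfShape WalkingCospan (F h)]
    [∀ i, Injective (E i)] : Injective (cofree hδ E) where
  factors {M N} g m _ := by
    have := mono_f_of_mono m
    refine ⟨cofreeLift hδ fun i => Injective.factorThru (g.f i ≫ cofreeCounit F E i) (m.f i),
      cofree_hom_ext hδ fun i => ?_⟩
    rw [comp_f, Category.assoc, cofreeLift_f_comp_counit, Injective.comp_factorThru]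

end Cofree

/-- The quotient of the comodule `M` along a family of epimorphisms `p` with which the coaction of
`M` and the morphisms `d` are compatible. -/
def ofEpi (M : Comod F δ) {C : ∀ i, A i} (p : ∀ i, M.X i ⟶ C i) [∀ i, Epi (p i)]
    (d : ∀ ⦃i j : Fin n⦄ (h : i < j), C j ⟶ (F h).obj (C i))
    (hd : ∀ ⦃i j : Fin n⦄ (h : i < j), p j ≫ d h = M.d h ≫ (F h).map (p i)) : Comod F δ where
  X := C
  d h := d h
  compat {i k j} h₁ h₂ := by
    have nat := (δ h₁ h₂).naturality (p i)
    simp only [Functor.comp_map] at nat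
    rw [← cancel_epi (p j), reassoc_of% hd h₂, ← Functor.map_comp, hd h₁, Functor.map_comp,
      reassoc_of% M.compat h₁ h₂, reassoc_of% hd (h₁.trans h₂), nat]

section Zero

variable [∀ i, HasZeroMorphisms (A i)]

/-- The comodule on the family `S` with zero coaction. -/
abbrev zeroCoaction (S : ∀ i, A i) : Comod F δ where
  X := S
  d _ := 0
  compat _ _ := by rw [zero_comp, zero_comp]

variable [∀ ⦃i j : Fin n⦄ (h : i < j), (F h).PreservesZeroMorphisms]

section Single

variable {N : Comod F δ} {S : ∀ i, A i} {j : Fin n} (hN : ∀ k < j, IsZero (N.X k))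

/-- The morphism given by `φ` at `j` and by zero elsewhere, from a comodule with zero coaction to
one which vanishes below `j`. -/
def zeroCoactionSingle (φ : S j ⟶ N.X j) : zeroCoaction (δ := δ) S ⟶ N where
  f := Pi.single (M := fun i => S i ⟶ N.X i) j φ
  comm {k l} h := by
    obtain rfl | hl := eq_or_ne l j
    · exact ((F h).map_isZero (hN k h)).eq_of_tgt _ _
    · rw [Pi.single_eq_of_ne hl, zero_comp, zero_comp]

theorem zeroCoactionSingle_f_self (φ : S j ⟶ N.X j) : (zeroCoactionSingle hN φ).f j = φ :=
  Pi.single_eq_same (M := fun i => S i ⟶ N.X i) j φ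

theorem mono_zeroCoactionSingle (hS : ∀ k, k ≠ j → IsZero (S k)) (φ : S j ⟶ N.X j) [Mono φ] :
    Mono (zeroCoactionSingle hN φ) :=
  mono_of_forall_mono_f _ fun k => by
    obtain rfl | hk := eq_or_ne k j
    · rwa [zeroCoactionSingle_f_self]
    · exact ⟨fun _ _ _ => (hS k hk).eq_of_tgt _ _⟩

end Single

variable [∀ i, HasZeroObject (A i)]

open ZeroObject in
omit [∀ i, HasZeroMorphisms (A i)] in
theorem exists_family_isZero_of_ne {j : Fin n} (S : A j) :
    ∃ S' : ∀ i, A i, S' j = S ∧ ∀ k, k ≠ j → IsZero (S' k) :=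
  ⟨Function.update (fun _ => 0) j S, Function.update_self .., fun k hk => by
    rw [Function.update_of_ne hk]
    exact isZero_zero _⟩

open ZeroObject in
theorem exists_family_epi_isZero_below (X : ∀ k, A k) (j : Fin n) :
    ∃ (C : ∀ k, A k) (p : ∀ k, X k ⟶ C k), (∀ k, Epi (p k)) ∧
      (∀ k, j ≤ k → IsIso (p k)) ∧ ∀ k < j, IsZero (C k) := by
  have componentwise (k : Fin n) :
      ∃ (C : A k) (p : X k ⟶ C), Epi p ∧ (j ≤ k → IsIso p) ∧ (k < j → IsZero C) := by
    obtain hk | hk := le_or_gt j k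
    · exact ⟨X k, 𝟙 _, inferInstance, fun _ => inferInstance, fun h => absurd h hk.not_gt⟩
    · exact ⟨0, 0, ⟨fun _ _ _ => (isZero_zero _).eq_of_src _ _⟩, fun h => absurd h hk.not_ge,
        fun _ => isZero_zero _⟩
  choose C p hp_epi hp_iso hC using componentwise
  exact ⟨C, p, hp_epi, hp_iso, hC⟩

theorem injective_X_of_isZero_below {N : Comod F δ} [Injective N] {j : Fin n}
    (hN : ∀ k < j, IsZero (N.X k)) : Injective (N.X j) where
  factors {S T} := by
    obtain ⟨S, rfl, hS⟩ := exists_family_isZero_of_ne S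
    obtain ⟨T, rfl, hT⟩ := exists_family_isZero_of_ne T
    intro g m _
    have hT_below : ∀ k < j, IsZero ((zeroCoaction (δ := δ) T).X k) := fun k hk => hT k hk.ne
    have := mono_zeroCoactionSingle hT_below hS m
    let extension := Injective.factorThru (zeroCoactionSingle hN g) (zeroCoactionSingle hT_below m)
    have extension_comp : zeroCoactionSingle hT_below m ≫ extension = zeroCoactionSingle hN g :=
      Injective.comp_factorThru _ _
    refine ⟨extension.f j, ?_⟩
    have at_j := congrFun (congrArg ComodHom.f extension_comp) j
    rwa [comp_f, zeroCoactionSingle_f_self, zeroCoactionSingle_f_self] at at_j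

theorem exists_epi_isIso_isZero_below (M : Comod F δ) (j : Fin n) :
    ∃ (N : Comod F δ) (π : M ⟶ N), Epi π ∧ IsIso (π.f j) ∧ ∀ k < j, IsZero (N.X k) := by
  obtain ⟨C, p, hp_epi, hp_iso, hC⟩ := exists_family_epi_isZero_below M.X j
  have coaction_factors {k l : Fin n} (h : k < l) :
      ∃ d : C l ⟶ (F h).obj (C k), p l ≫ d = M.d h ≫ (F h).map (p k) := by
    obtain hk | hk := le_or_gt j k
    · have := hp_iso l (hk.trans h.le)
      exact ⟨inv (p l) ≫ M.d h ≫ (F h).map (p k), IsIso.hom_inv_id_assoc _ _⟩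
    · exact ⟨0, ((F h).map_isZero (hC k hk)).eq_of_tgt _ _⟩
  choose d hd using @coaction_factors
  let π : M ⟶ ofEpi M p @d @hd := ⟨p, @hd⟩
  exact ⟨_, π, epi_of_forall_epi_f π hp_epi, hp_iso j le_rfl, hC⟩

theorem injective_X_of_hereditary (hH : Hereditary (Comod F δ)) (M : Comod F δ) [Injective M]
    (j : Fin n) : Injective (M.X j) := by
  obtain ⟨N, π, π_epi, _, hN⟩ := exists_epi_isIso_isZero_below M j
  have : Injective N := hH π π_epi inferInstance
  exact Injective.of_iso (asIso (π.f j)).symm (injective_X_of_isZero_below hN)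

end Zero

end Comod

theorem stmt_14_general [∀ i, HasZeroMorphisms (A i)] [∀ i, HasFiniteLimits (A i)]
    [∀ ⦃i j : Fin n⦄ (h : i < j), PreservesFiniteLimits (F h)]
    (hδ : IsCoassociative F δ) (hH : Hereditary (Comod F δ))
    ⦃i j : Fin n⦄ (hij : i < j) (E : A i) (hE : Injective E) :
    Injective ((F hij).obj E) := by
  have (k : Fin n) : HasZeroObject (A k) := hasZeroObject_of_hasTerminal_object
  obtain ⟨E, rfl, hE_zero⟩ := Comod.exists_family_isZero_of_ne E
  have (k : Fin n) : Injective (E k) := by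
    obtain rfl | hk := eq_or_ne k i
    · exact hE
    · exact (hE_zero k hk).injective
  have := Comod.injective_cofree hδ (E := E)
  have : Injective (Comod.cofreeObj F E j) :=
    Comod.injective_X_of_hereditary hH (Comod.cofree hδ E) j
  have := Comod.isSplitEpi_cofreeProj F E hij
  exact Retract.injective ⟨section_ _, Comod.cofreeProj F E hij, IsSplitEpi.id _⟩

end

theorem stmt_14 (hn : 2 ≤ n)
    (hδ : ∀ ⦃i k l j : Fin n⦄ (h₁ : i < k) (h₂ : k < l) (h₃ : l < j) (X : A i),
      (δ h₁ (h₂.trans h₃)).app X ≫ (δ h₂ h₃).app ((F h₁).obj X) =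
        (δ (h₁.trans h₂) h₃).app X ≫ (F h₃).map ((δ h₁ h₂).app X))
    (hadd : ∀ ⦃i j : Fin n⦄ (h : i < j), (F h).Additive)
    (hlex : ∀ ⦃i j : Fin n⦄ (h : i < j), PreservesFiniteLimits (F h))
    (hH : Hereditary (Comod F δ))
    ⦃i j : Fin n⦄ (hij : i < j) (E : A i) (hE : Injective E) :
    Injective ((F hij).obj E) :=
  stmt_14_general F δ hδ hH hij E hE
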